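/- Let (Y_n)_{n∈ℕ} be a supermartingale with respect to the filtration (ℱ_n) such that Y_0 is almost surely equal to a constant, and let ([a_n, b_n])_{n∈ℕ} be a sequence of nonempty real intervals with a_n < b_n and a_n ≤ Y_{n+1} − Y_n ≤ b_n almost surely for every n. Then for every n ≥ 1 and every λ > 0, P(Y_n − Y_0 ≥ λ) ≤ exp(−2λ² / Σ_{k=0}^{n−1} (b_k − a_k)²). Symmetrically, if (Y_n) is a submartingale satisfying the same difference bounds with constant Y_0, then P(Y_n − Y_0 ≤ −λ) ≤ exp(−2λ² / Σ_{k=0}^{n−1} (b_k − a_k)²). -/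

import Mathlib

open MeasureTheory Filter

/-!
By convexity, for `t ≥ 0` the function `x ↦ exp (t * x)` lies on `[a, b]` below a chord with
nonnegative slope, so an increment with nonpositive conditional mean and values in `[a, b]` has
conditional moment generating function at most the value of that chord at `0`. This value is the
moment generating function of a centred two-point distribution on `{a, b}`, and Hoeffding's lemma
bounds it by `exp (t ^ 2 * (b - a) ^ 2 / 8)`. Conditioning on the past one step at a time multiplies
these bounds, and the Chernoff bound with the optimal `t` concludes.
-/

section Hoeffding

open ProbabilityTheory Real
open scoped unitInterval

lemma two_point_mgf_le {a b : ℝ} (p : I) (hmean : p * a + (1 - p) * b = 0) (t : ℝ) :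
    p * exp (t * a) + (1 - p) * exp (t * b) ≤ exp (((b - a) / 2) ^ 2 * t ^ 2 / 2) := by
  have hmem : ∀ᵐ x ∂Ber(a, b, p), id x ∈ Set.uIcc a b :=
    mem_ae_iff_prob_eq_one measurableSet_uIcc |>.2 <|
      bernoulliMeasure_apply_of_mem_of_mem p measurableSet_uIcc Set.left_mem_uIcc
        Set.right_mem_uIcc
  have hint : ∫ x, id x ∂Ber(a, b, p) = 0 := by
    simpa only [integral_bernoulliMeasure, smul_eq_mul, id] using hmean
  have hsub := hasSubgaussianMGF_of_mem_Icc_of_integral_eq_zero aemeasurable_id hmem hint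
  simpa [mgf, integral_bernoulliMeasure, max_sub_min_eq_abs, div_pow] using hsub.mgf_le t

lemma exp_mul_le_chord {a b x : ℝ} (hab : a < b) (hx : x ∈ Set.Icc a b) (t : ℝ) :
    exp (t * x) ≤ (b - x) / (b - a) * exp (t * a) + (x - a) / (b - a) * exp (t * b) := by
  have hd : 0 < b - a := sub_pos.2 hab
  have hconv := convexOn_exp.2 (Set.mem_univ (t * a)) (Set.mem_univ (t * b))
    (div_nonneg (sub_nonneg.2 hx.2) hd.le) (div_nonneg (sub_nonneg.2 hx.1) hd.le)
    (by field_simp; ring)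
  have hcomb : (b - x) / (b - a) * (t * a) + (x - a) / (b - a) * (t * b) = t * x := by
    field_simp; ring
  simpa only [smul_eq_mul, hcomb] using hconv

lemma exists_exp_mul_le_exp_add_mul {a t : ℝ} (ha : a ≤ 0) (ht : 0 ≤ t) (b : ℝ) :
    ∃ s, 0 ≤ s ∧ ∀ x ∈ Set.Icc a b, exp (t * x) ≤ exp (((b - a) / 2) ^ 2 * t ^ 2 / 2) + s * x := by
  rcases le_or_gt b 0 with hb | hb
  · refine ⟨0, le_rfl, fun x hx ↦ ?_⟩
    rw [zero_mul, add_zero, exp_le_exp]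
    exact (mul_nonpos_of_nonneg_of_nonpos ht (hx.2.trans hb)).trans (by positivity)
  have hab : a < b := ha.trans_lt hb
  have hd : 0 < b - a := sub_pos.2 hab
  let p : I := ⟨b / (b - a), unitInterval.div_mem hb.le hd.le (by linarith)⟩
  have hmean : p * a + (1 - p) * b = 0 := by
    simp only [p]; field_simp; ring
  refine ⟨(exp (t * b) - exp (t * a)) / (b - a), ?_, fun x hx ↦ ?_⟩
  · exact div_nonneg (sub_nonneg.2 (exp_le_exp.2 (by gcongr))) hd.le
  calc exp (t * x)
      ≤ (b - x) / (b - a) * exp (t * a) + (x - a) / (b - a) * exp (t * b) :=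
        exp_mul_le_chord hab hx t
    _ = (p * exp (t * a) + (1 - p) * exp (t * b)) + (exp (t * b) - exp (t * a)) / (b - a) * x := by
        simp only [p]; field_simp; ring
    _ ≤ exp (((b - a) / 2) ^ 2 * t ^ 2 / 2) + (exp (t * b) - exp (t * a)) / (b - a) * x := by
        gcongr; exact two_point_mgf_le p hmean t

variable {Ω : Type*} {m m0 : MeasurableSpace Ω} {μ : Measure Ω}

lemma condExp_exp_mul_le_of_mem_Icc [IsFiniteMeasure μ] (hm : m ≤ m0) {X : Ω → ℝ} {a b t : ℝ}
    (hX : AEMeasurable X μ) (hb : ∀ᵐ ω ∂μ, X ω ∈ Set.Icc a b) (hmean : μ[X | m] ≤ᵐ[μ] 0)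
    (ht : 0 ≤ t) :
    μ[fun ω ↦ exp (t * X ω) | m] ≤ᵐ[μ] fun _ ↦ exp (((b - a) / 2) ^ 2 * t ^ 2 / 2) := by
  rcases eq_zero_or_neZero μ with rfl | _
  · rw [ae_zero]; exact eventually_bot
  have hXi : Integrable X μ := .of_mem_Icc a b hX hb
  have ha : a ≤ 0 := by
    have hle : (fun _ ↦ a) ≤ᵐ[μ] μ[X | m] := by
      simpa only [condExp_const hm] using
        condExp_mono (m := m) (integrable_const a) hXi (hb.mono fun _ h ↦ h.1)
    obtain ⟨_, hω⟩ := (hle.trans hmean).exists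
    exact hω
  obtain ⟨s, hs, hchord⟩ := exists_exp_mul_le_exp_add_mul ha ht b
  set C := exp (((b - a) / 2) ^ 2 * t ^ 2 / 2)
  have hmono : μ[fun ω ↦ exp (t * X ω) | m] ≤ᵐ[μ] μ[(fun _ ↦ C) + s • X | m] :=
    condExp_mono (integrable_exp_mul_of_mem_Icc hX hb) ((integrable_const C).add (hXi.smul s))
      (hb.mono fun ω hω ↦ hchord (X ω) hω)
  filter_upwards [hmono, condExp_add (integrable_const C) (hXi.smul s) m, condExp_smul s X m,
    hmean] with ω hle hadd hsmul hneg
  rw [hadd, Pi.add_apply, hsmul, condExp_const hm, Pi.smul_apply, smul_eq_mul] at hle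
  exact hle.trans (add_le_of_nonpos_right (mul_nonpos_of_nonneg_of_nonpos hs hneg))

lemma integral_mul_le_of_condExp_le (hm : m ≤ m0) [SigmaFinite (μ.trim hm)] {f g : Ω → ℝ} {c : ℝ}
    (hf : StronglyMeasurable[m] f) (hf_nonneg : 0 ≤ᵐ[μ] f) (hfi : Integrable f μ)
    (hgi : Integrable g μ) (hfg : Integrable (f * g) μ) (hgc : μ[g | m] ≤ᵐ[μ] fun _ ↦ c) :
    ∫ ω, (f * g) ω ∂μ ≤ (∫ ω, f ω ∂μ) * c := by
  rw [← integral_condExp hm, ← integral_mul_const]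
  refine integral_mono_ae integrable_condExp (hfi.mul_const c) ?_
  filter_upwards [condExp_mul_of_stronglyMeasurable_left hf hfg hgi, hf_nonneg, hgc]
    with ω hpull h_nonneg hle
  rw [hpull]
  exact mul_le_mul_of_nonneg_left hle h_nonneg

lemma condExp_sub_nonpos_of_supermartingale {ι E : Type*} [Preorder ι] [NormedAddCommGroup E]
    [NormedSpace ℝ E] [CompleteSpace E] [PartialOrder E] [IsOrderedAddMonoid E]
    {ℱ : Filtration ι m0} {Y : ι → Ω → E} (hY : Supermartingale Y ℱ μ) {i j : ι} (hij : i ≤ j) :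
    μ[Y j - Y i | ℱ i] ≤ᵐ[μ] 0 := by
  have hneg : Y j - Y i = -((-Y) j - (-Y) i) := by simp [neg_add_eq_sub]
  rw [hneg]
  filter_upwards [hY.neg.condExp_sub_nonneg hij, condExp_neg ((-Y) j - (-Y) i) (ℱ i)]
    with ω h_nonneg hω
  rw [hω]
  exact neg_nonpos.2 h_nonneg

lemma measure_ge_le_of_forall_mgf_le [IsFiniteMeasure μ] {X : Ω → ℝ} {c ε : ℝ} (hc : 0 < c)
    (hε : 0 ≤ ε) (hint : ∀ t, 0 ≤ t → Integrable (fun ω ↦ exp (t * X ω)) μ)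
    (hmgf : ∀ t, 0 ≤ t → mgf X μ t ≤ exp (c * t ^ 2 / 2)) :
    μ.real {ω | ε ≤ X ω} ≤ exp (-ε ^ 2 / (2 * c)) := by
  have ht : 0 ≤ ε / c := div_nonneg hε hc.le
  calc μ.real {ω | ε ≤ X ω}
      ≤ exp (-(ε / c) * ε) * mgf X μ (ε / c) := measure_ge_le_exp_mul_mgf ε ht (hint _ ht)
    _ ≤ exp (-(ε / c) * ε) * exp (c * (ε / c) ^ 2 / 2) := by gcongr; exact hmgf _ ht
    _ = exp (-ε ^ 2 / (2 * c)) := by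
        rw [← exp_add]
        congr 1
        field_simp
        ring

variable {ℱ : Filtration ℕ m0} {Y : ℕ → Ω → ℝ} {a b : ℕ → ℝ} {n : ℕ}

lemma ae_sub_zero_mem_Icc_sum
    (hbdd : ∀ k < n, ∀ᵐ ω ∂μ, Y (k + 1) ω - Y k ω ∈ Set.Icc (a k) (b k)) :
    ∀ᵐ ω ∂μ, Y n ω - Y 0 ω ∈
      Set.Icc (∑ k ∈ Finset.range n, a k) (∑ k ∈ Finset.range n, b k) := by
  have hall : ∀ᵐ ω ∂μ, ∀ k ∈ Finset.range n, Y (k + 1) ω - Y k ω ∈ Set.Icc (a k) (b k) :=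
    (Finset.eventually_all _).2 fun k hk ↦ hbdd k (Finset.mem_range.1 hk)
  filter_upwards [hall] with ω hω
  rw [← Finset.sum_range_sub (Y · ω)]
  exact ⟨Finset.sum_le_sum fun k hk ↦ (hω k hk).1, Finset.sum_le_sum fun k hk ↦ (hω k hk).2⟩

lemma integrable_exp_mul_sub_zero [IsFiniteMeasure μ] (hY : ∀ k, AEMeasurable (Y k) μ)
    (hbdd : ∀ k < n, ∀ᵐ ω ∂μ, Y (k + 1) ω - Y k ω ∈ Set.Icc (a k) (b k)) (t : ℝ) :
    Integrable (fun ω ↦ exp (t * (Y n ω - Y 0 ω))) μ :=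
  integrable_exp_mul_of_mem_Icc ((hY n).sub (hY 0)) (ae_sub_zero_mem_Icc_sum hbdd)

lemma mgf_sub_zero_le_of_supermartingale [IsZeroOrProbabilityMeasure μ]
    (hY : Supermartingale Y ℱ μ)
    (hbdd : ∀ k < n, ∀ᵐ ω ∂μ, Y (k + 1) ω - Y k ω ∈ Set.Icc (a k) (b k)) {t : ℝ} (ht : 0 ≤ t) :
    mgf (fun ω ↦ Y n ω - Y 0 ω) μ t ≤
      exp ((∑ k ∈ Finset.range n, ((b k - a k) / 2) ^ 2) * t ^ 2 / 2) := by
  have hmeas (k : ℕ) : AEMeasurable (Y k) μ := (hY.integrable k).aemeasurable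
  induction n with
  | zero => simp [mgf]
  | succ n ih =>
    have hpast : ∀ k < n, ∀ᵐ ω ∂μ, Y (k + 1) ω - Y k ω ∈ Set.Icc (a k) (b k) :=
      fun k hk ↦ hbdd k (hk.trans n.lt_succ_self)
    let past : Ω → ℝ := fun ω ↦ exp (t * (Y n ω - Y 0 ω))
    let step : Ω → ℝ := fun ω ↦ exp (t * (Y (n + 1) - Y n) ω)
    have hfactor : (fun ω ↦ exp (t * (Y (n + 1) ω - Y 0 ω))) = past * step := by
      ext ω
      simp only [past, step, Pi.mul_apply, Pi.sub_apply, ← exp_add]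
      ring_nf
    have hpast_meas : StronglyMeasurable[ℱ n] past :=
      continuous_exp.comp_stronglyMeasurable <| ((hY.stronglyMeasurable n).sub
        ((hY.stronglyMeasurable 0).mono (ℱ.mono n.zero_le))).const_mul t
    have hstep_meas : AEMeasurable (Y (n + 1) - Y n) μ := (hmeas _).sub (hmeas _)
    have hcond : μ[step | ℱ n] ≤ᵐ[μ] fun _ ↦ exp (((b n - a n) / 2) ^ 2 * t ^ 2 / 2) :=
      condExp_exp_mul_le_of_mem_Icc (ℱ.le n) hstep_meas (hbdd n n.lt_succ_self)
        (condExp_sub_nonpos_of_supermartingale hY n.le_succ) ht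
    calc mgf (fun ω ↦ Y (n + 1) ω - Y 0 ω) μ t
        = ∫ ω, (past * step) ω ∂μ := by rw [mgf, hfactor]
      _ ≤ mgf (fun ω ↦ Y n ω - Y 0 ω) μ t * exp (((b n - a n) / 2) ^ 2 * t ^ 2 / 2) :=
          integral_mul_le_of_condExp_le (ℱ.le n) hpast_meas (ae_of_all _ fun _ ↦ (exp_pos _).le)
            (integrable_exp_mul_sub_zero hmeas hpast t)
            (integrable_exp_mul_of_mem_Icc hstep_meas (hbdd n n.lt_succ_self))
            (hfactor ▸ integrable_exp_mul_sub_zero hmeas hbdd t) hcond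
      _ ≤ exp ((∑ k ∈ Finset.range n, ((b k - a k) / 2) ^ 2) * t ^ 2 / 2) *
            exp (((b n - a n) / 2) ^ 2 * t ^ 2 / 2) := by gcongr; exact ih hpast
      _ = exp ((∑ k ∈ Finset.range (n + 1), ((b k - a k) / 2) ^ 2) * t ^ 2 / 2) := by
          rw [← exp_add, Finset.sum_range_succ, add_mul, add_div]

lemma measure_sub_zero_ge_le_of_supermartingale [IsZeroOrProbabilityMeasure μ]
    (hY : Supermartingale Y ℱ μ) (hab : ∃ k < n, a k ≠ b k)
    (hbdd : ∀ k < n, ∀ᵐ ω ∂μ, Y (k + 1) ω - Y k ω ∈ Set.Icc (a k) (b k)) {lam : ℝ}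
    (hlam : 0 ≤ lam) :
    μ.real {ω | lam ≤ Y n ω - Y 0 ω} ≤
      exp (-2 * lam ^ 2 / ∑ k ∈ Finset.range n, (b k - a k) ^ 2) := by
  have hpos : 0 < ∑ k ∈ Finset.range n, ((b k - a k) / 2) ^ 2 := by
    obtain ⟨k, hk, hne⟩ := hab
    have hk_ne : (b k - a k) / 2 ≠ 0 := div_ne_zero (sub_ne_zero.2 hne.symm) two_ne_zero
    exact Finset.sum_pos' (fun _ _ ↦ sq_nonneg _)
      ⟨k, Finset.mem_range.2 hk, sq_pos_of_ne_zero hk_ne⟩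
  have hexponent : -lam ^ 2 / (2 * ∑ k ∈ Finset.range n, ((b k - a k) / 2) ^ 2) =
      -2 * lam ^ 2 / ∑ k ∈ Finset.range n, (b k - a k) ^ 2 := by
    simp only [div_pow, ← Finset.sum_div]
    ring
  rw [← hexponent]
  exact measure_ge_le_of_forall_mgf_le hpos hlam
    (fun t _ ↦ integrable_exp_mul_sub_zero (fun k ↦ (hY.integrable k).aemeasurable) hbdd t)
    (fun _ ht ↦ mgf_sub_zero_le_of_supermartingale hY hbdd ht)

theorem hoeffding_inequality_on_martingales_general [IsZeroOrProbabilityMeasure μ]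
    (hab : ∃ k < n, a k ≠ b k)
    (hbdd : ∀ k < n, ∀ᵐ ω ∂μ, Y (k + 1) ω - Y k ω ∈ Set.Icc (a k) (b k)) {lam : ℝ}
    (hlam : 0 ≤ lam) :
    (Supermartingale Y ℱ μ →
      μ.real {ω | lam ≤ Y n ω - Y 0 ω} ≤
        exp (-2 * lam ^ 2 / ∑ k ∈ Finset.range n, (b k - a k) ^ 2)) ∧
    (Submartingale Y ℱ μ →
      μ.real {ω | Y n ω - Y 0 ω ≤ -lam} ≤
        exp (-2 * lam ^ 2 / ∑ k ∈ Finset.range n, (b k - a k) ^ 2)) := by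
  refine ⟨fun hY ↦ measure_sub_zero_ge_le_of_supermartingale hY hab hbdd hlam, fun hY ↦ ?_⟩
  have hneg_ne : ∃ k < n, -b k ≠ -a k :=
    hab.imp fun k hk ↦ ⟨hk.1, fun h ↦ hk.2 (neg_injective h).symm⟩
  have hneg_bdd : ∀ k < n, ∀ᵐ ω ∂μ, (-Y) (k + 1) ω - (-Y) k ω ∈ Set.Icc (-b k) (-a k) := by
    intro k hk
    filter_upwards [hbdd k hk] with ω hω
    simp only [Pi.neg_apply]
    constructor <;> linarith [hω.1, hω.2]
  have hset : {ω | Y n ω - Y 0 ω ≤ -lam} = {ω | lam ≤ (-Y) n ω - (-Y) 0 ω} := by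
    ext ω
    simp only [Set.mem_ofPred_eq, Pi.neg_apply]
    constructor <;> intro h <;> linarith
  simpa only [hset, neg_sub_neg] using
    measure_sub_zero_ge_le_of_supermartingale hY.neg hneg_ne hneg_bdd hlam

end Hoeffding

/-- Hoeffding's (Azuma's) inequality on martingales: if `Y` is a supermartingale with
`Y 0` a.s. equal to a constant and increments `Y (n+1) - Y n ∈ [a n, b n]` a.s. (with
`a n < b n`), then for every `n ≥ 1` and `λ > 0`,
`P(Y n - Y 0 ≥ λ) ≤ exp(-2λ² / ∑_{k<n} (b k - a k)²)`; symmetrically, if `Y` is a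
submartingale with the same hypotheses, then
`P(Y n - Y 0 ≤ -λ) ≤ exp(-2λ² / ∑_{k<n} (b k - a k)²)`. -/
theorem hoeffding_inequality_on_martingales
    {Ω : Type*} {m0 : MeasurableSpace Ω} {μ : Measure Ω} [IsProbabilityMeasure μ]
    (ℱ : Filtration ℕ m0)
    (Y : ℕ → Ω → ℝ)
    (y₀ : ℝ) (hY0 : Y 0 =ᵐ[μ] fun _ => y₀)
    (a b : ℕ → ℝ) (hab : ∀ n, a n < b n)
    (hbdd : ∀ n : ℕ, ∀ᵐ ω ∂μ,
      a n ≤ Y (n + 1) ω - Y n ω ∧ Y (n + 1) ω - Y n ω ≤ b n) :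
    (Supermartingale Y ℱ μ →
      ∀ n : ℕ, 1 ≤ n → ∀ lam : ℝ, 0 < lam →
        (μ {ω | lam ≤ Y n ω - Y 0 ω}).toReal
          ≤ Real.exp (-2 * lam ^ 2 / ∑ k ∈ Finset.range n, (b k - a k) ^ 2)) ∧
    (Submartingale Y ℱ μ →
      ∀ n : ℕ, 1 ≤ n → ∀ lam : ℝ, 0 < lam →
        (μ {ω | Y n ω - Y 0 ω ≤ -lam}).toReal
          ≤ Real.exp (-2 * lam ^ 2 / ∑ k ∈ Finset.range n, (b k - a k) ^ 2)) :=
  ⟨fun hY _ hn _ hlam ↦ (hoeffding_inequality_on_martingales_general ⟨0, hn, (hab 0).ne⟩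
      (fun k _ ↦ hbdd k) hlam.le).1 hY,
    fun hY _ hn _ hlam ↦ (hoeffding_inequality_on_martingales_general ⟨0, hn, (hab 0).ne⟩
      (fun k _ ↦ hbdd k) hlam.le).2 hY⟩
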